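/- (Coefficient identity underlying Lemma 4.1, vector form) Let n ≥ 1, let ρ, λ, μ ∈ ℕⁿ and α ∈ ℤⁿ. Then in ℚ(v): [ρ+α ∣ μ] · [α ∣ λ] = Σ_{ν ∈ ℕⁿ, ν ≤ μ} b_ν · v^{−α·ν} · [α ∣ λ+μ−ν], where for each ν ≤ μ the coefficient b_ν is the finite sum b_ν = Σ_{j ∈ ℕⁿ, ν−λ ≤ j ≤ ν} v^{ρ·(μ−j) + λ·(μ−j)} · [ρ ∣ j] · ∏_{i=1}^n [λ_i+μ_i−ν_i ; ν_i−j_i, λ_i−ν_i+j_i, μ_i−ν_i] (the sum over all j ∈ ℕⁿ with j ≤ ν and ν−λ ≤ j componentwise, i.e. ν_i − λ_i ≤ j_i ≤ ν_i for all i). -/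

import Mathlib

open Finset

noncomputable section

/-- The field `ℚ(v)` of rational functions over `ℚ`. -/
abbrev K : Type := RatFunc ℚ

/-- The indeterminate `v`. -/
def v : K := RatFunc.X

/-- `[i] = (v^i - v^{-i})/(v - v^{-1})`. -/
def qint (i : ℤ) : K := (v ^ i - v ^ (-i)) / (v - v⁻¹)

/-- `[t]! = [1][2]⋯[t]`. -/
def qfact (t : ℕ) : K := ∏ s ∈ Finset.range t, qint (s + 1)

/-- The Gaussian binomial coefficient `[N ∣ t] = ([N][N-1]⋯[N-t+1])/[t]!`. -/
def qbinom (N : ℤ) (t : ℕ) : K := (∏ s ∈ Finset.range t, qint (N - s)) / qfact t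

/-- The q-trinomial coefficient `[a+b+c ; a, b, c] = [a+b+c]!/([a]![b]![c]!)`. -/
def qtri (a b c : ℕ) : K := qfact (a + b + c) / (qfact a * qfact b * qfact c)

/-- `[μ ∣ λ] = ∏ i, [μ i ∣ λ i]` for `μ ∈ ℤⁿ`, `λ ∈ ℕⁿ`. -/
def qbinomV {n : ℕ} (μ : Fin n → ℤ) (lam : Fin n → ℕ) : K := ∏ i, qbinom (μ i) (lam i)

/-- `μ · δ = ∑ i, μ i * δ i`. -/
def dotZ {n : ℕ} (a b : Fin n → ℤ) : ℤ := ∑ i, a i * b i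

/-!
The identity is multiplicative over coordinates, so it reduces to `n = 1`. There, expand
`[ρ+α ∣ μ]` by the `q`-Vandermonde identity, then expand each product `[α ∣ m]·[α ∣ λ]` by writing
`α = λ + (α - λ)` and applying the `q`-Vandermonde identity again: `[α-λ ∣ b]·[α ∣ λ]` is a multiple
of `[α ∣ λ+b]`. Collecting the terms with the same `ν = j + k` gives the formula.

The `q`-Vandermonde identity for `[x+y ∣ m]` with arbitrary integers `x`, `y` is proved by induction
on `m`: multiply by `[m+1]` and split both `[m+1] = [a+b]` and `[x+y-m] = [(x-a)+(y-b)]`.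
-/

theorem v_ne_zero : v ≠ 0 := RatFunc.X_ne_zero

theorem v_zpow_injective : Function.Injective fun i : ℤ => v ^ i := by
  classical
  intro i j hij
  simpa [v] using congrArg (RatFunc.inftyValuation ℚ) hij

theorem zpow_sum_of_ne_zero {ι G : Type*} [CommGroupWithZero G] {a : G} (ha : a ≠ 0)
    (s : Finset ι) (f : ι → ℤ) : a ^ ∑ i ∈ s, f i = ∏ i ∈ s, a ^ f i := by
  classical
  induction s using Finset.induction_on with
  | empty => simp
  | insert i s hi ih => rw [sum_insert hi, prod_insert hi, zpow_add₀ ha, ih]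

theorem v_sub_inv_ne_zero : v - v⁻¹ ≠ 0 := by
  have hne : v ^ (1 : ℤ) ≠ v ^ (-1 : ℤ) := v_zpow_injective.ne (by decide)
  simpa [sub_ne_zero] using hne

@[simp]
theorem qint_zero : qint 0 = 0 := by simp [qint]

theorem qint_ne_zero {i : ℤ} (hi : i ≠ 0) : qint i ≠ 0 :=
  div_ne_zero (sub_ne_zero.mpr <| v_zpow_injective.ne (by lia)) v_sub_inv_ne_zero

theorem qint_add (x y : ℤ) : qint (x + y) = v ^ y * qint x + v ^ (-x) * qint y := by
  simp only [qint, mul_div_assoc', ← add_div, mul_sub, ← zpow_add₀ v_ne_zero]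
  ring_nf

theorem qfact_ne_zero (t : ℕ) : qfact t ≠ 0 :=
  prod_ne_zero_iff.mpr fun _ _ => qint_ne_zero (by lia)

@[simp]
theorem qbinom_zero_right (N : ℤ) : qbinom N 0 = 1 := by simp [qbinom, qfact]

theorem qbinom_eq_zero_of_lt {n t : ℕ} (h : n < t) : qbinom n t = 0 := by
  have hprod : ∏ s ∈ range t, qint ((n : ℤ) - s) = 0 :=
    prod_eq_zero (mem_range.mpr h) (by simp)
  rw [qbinom, hprod, zero_div]

theorem qint_mul_qbinom_succ (N : ℤ) (t : ℕ) :
    qint (t + 1) * qbinom N (t + 1) = qint (N - t) * qbinom N t := by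
  have hint : qint (t + 1) ≠ 0 := qint_ne_zero (by lia)
  have hfact := qfact_ne_zero t
  simp only [qbinom, qfact, prod_range_succ] at hfact ⊢
  field_simp

theorem qbinom_natCast_self (n : ℕ) : qbinom n n = 1 := by
  have hreflect : ∏ s ∈ range n, qint ((n : ℤ) - s) = qfact n := by
    rw [qfact, ← prod_range_reflect]
    refine prod_congr rfl fun s hs => congrArg qint ?_
    have := mem_range.mp hs
    lia
  rw [qbinom, hreflect, div_self (qfact_ne_zero n)]

theorem qfact_mul_qbinom_add_right (N : ℤ) (a b : ℕ) :
    qfact (a + b) * qbinom N (a + b) =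
      qfact a * qbinom N a * (qfact b * qbinom (N - a) b) := by
  simp only [qbinom, mul_div_cancel₀ _ (qfact_ne_zero _), prod_range_add, Nat.cast_add, sub_sub]

theorem qbinom_natCast_add (a b : ℕ) :
    qbinom (a + b) a = qfact (a + b) / (qfact a * qfact b) := by
  have h := qfact_mul_qbinom_add_right (a + b) a b
  rw [← Nat.cast_add, qbinom_natCast_self, Nat.cast_add, add_sub_cancel_left,
    qbinom_natCast_self] at h
  rw [eq_div_iff (mul_ne_zero (qfact_ne_zero a) (qfact_ne_zero b))]
  linear_combination -h

theorem qbinom_mul_qbinom_sub (N : ℤ) (a b : ℕ) :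
    qbinom N a * qbinom (N - a) b = qbinom (a + b) a * qbinom N (a + b) := by
  have ha := qfact_ne_zero a
  have hb := qfact_ne_zero b
  rw [qbinom_natCast_add]
  field_simp
  linear_combination -qfact_mul_qbinom_add_right N a b

theorem qtri_eq_qbinom_mul_qbinom (a b c : ℕ) :
    qtri a b c = qbinom (a + b) a * qbinom ((a + b : ℕ) + c) (a + b) := by
  have hab := qfact_ne_zero (a + b)
  rw [qtri, qbinom_natCast_add, qbinom_natCast_add]
  field_simp

theorem qbinom_vandermonde_summand_recurrence (x y : ℤ) (a b : ℕ) :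
    v ^ (b : ℤ) * qint (a + 1) * (v ^ (x * b - y * (a + 1)) * qbinom x (a + 1) * qbinom y b) +
        v ^ (-(a : ℤ)) * qint (b + 1) *
          (v ^ (x * (b + 1) - y * a) * qbinom x a * qbinom y (b + 1)) =
      qint (x + y - (a + b)) * (v ^ (x * b - y * a) * qbinom x a * qbinom y b) := by
  have hsplit : qint (x + y - (a + b)) =
      v ^ (-(y - b)) * qint (x - a) + v ^ (x - a) * qint (y - b) := by
    rw [show x + y - (a + b) = (y - b) + (x - a) by ring, qint_add, add_comm]
  have hfst : v ^ (b : ℤ) * v ^ (x * b - y * (a + 1)) = v ^ (-(y - b)) * v ^ (x * b - y * a) := by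
    simp only [← zpow_add₀ v_ne_zero]
    ring_nf
  have hsnd : v ^ (-(a : ℤ)) * v ^ (x * (b + 1) - y * a) = v ^ (x - a) * v ^ (x * b - y * a) := by
    simp only [← zpow_add₀ v_ne_zero]
    ring_nf
  calc
    _ = v ^ (b : ℤ) * v ^ (x * b - y * (a + 1)) * (qint (a + 1) * qbinom x (a + 1)) * qbinom y b +
        v ^ (-(a : ℤ)) * v ^ (x * (b + 1) - y * a) * qbinom x a *
          (qint (b + 1) * qbinom y (b + 1)) := by ring
    _ = _ := by
      rw [hfst, hsnd, qint_mul_qbinom_succ, qint_mul_qbinom_succ, hsplit]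
      ring

theorem qbinom_vandermonde (x y : ℤ) (m : ℕ) :
    qbinom (x + y) m =
      ∑ p ∈ antidiagonal m, v ^ (x * p.2 - y * p.1) * qbinom x p.1 * qbinom y p.2 := by
  induction m with
  | zero => simp
  | succ m ih =>
    set T : ℕ × ℕ → K := fun p => v ^ (x * p.2 - y * p.1) * qbinom x p.1 * qbinom y p.2 with hT
    refine mul_left_cancel₀ (qint_ne_zero (i := m + 1) (by lia)) ?_
    symm
    calc
      qint (m + 1) * ∑ p ∈ antidiagonal (m + 1), T p
      _ = ∑ p ∈ antidiagonal (m + 1), v ^ (p.2 : ℤ) * qint p.1 * T p +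
          ∑ p ∈ antidiagonal (m + 1), v ^ (-(p.1 : ℤ)) * qint p.2 * T p := by
        rw [mul_sum, ← sum_add_distrib]
        refine sum_congr rfl fun p hp => ?_
        have hsum : (m + 1 : ℤ) = p.1 + p.2 := mod_cast (mem_antidiagonal.mp hp).symm
        rw [hsum, qint_add, add_mul]
      _ = ∑ p ∈ antidiagonal m, (v ^ (p.2 : ℤ) * qint (p.1 + 1) * T (p.1 + 1, p.2) +
          v ^ (-(p.1 : ℤ)) * qint (p.2 + 1) * T (p.1, p.2 + 1)) := by
        rw [Nat.sum_antidiagonal_succ, Nat.sum_antidiagonal_succ', sum_add_distrib]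
        simp
      _ = ∑ p ∈ antidiagonal m, qint (x + y - m) * T p := by
        refine sum_congr rfl fun p hp => ?_
        have hsum : (m : ℤ) = p.1 + p.2 := mod_cast (mem_antidiagonal.mp hp).symm
        simpa [hT, hsum] using qbinom_vandermonde_summand_recurrence x y p.1 p.2
      _ = qint (m + 1) * qbinom (x + y) (m + 1) := by
        rw [← mul_sum, ← ih, qint_mul_qbinom_succ]

theorem qbinom_mul_qbinom (α : ℤ) (l m : ℕ) :
    qbinom α m * qbinom α l =
      ∑ p ∈ antidiagonal m, v ^ (l * (m : ℤ) - α * p.1) *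
        (qbinom l p.1 * qbinom (l + p.2) l) * qbinom α (l + p.2) := by
  rw [← add_sub_cancel (l : ℤ) α, qbinom_vandermonde, add_sub_cancel, sum_mul]
  refine sum_congr rfl fun p hp => ?_
  have hexp : (l : ℤ) * p.2 - (α - l) * p.1 = l * (m : ℤ) - α * p.1 := by
    rw [← mem_antidiagonal.mp hp]
    push_cast
    ring
  rw [hexp]
  linear_combination v ^ ((l : ℤ) * m - α * p.1) * qbinom l p.1 * qbinom_mul_qbinom_sub α l p.2

theorem qbinom_add_mul_qbinom_eq_sum_sum (ρ α : ℤ) (l m : ℕ) :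
    qbinom (ρ + α) m * qbinom α l =
      ∑ p ∈ antidiagonal m, ∑ q ∈ antidiagonal p.2,
        v ^ ((ρ + l) * (m - p.1)) * qbinom ρ p.1 * (qbinom l q.1 * qbinom (l + q.2) l) *
          v ^ (-(α * (p.1 + q.1))) * qbinom α (l + q.2) := by
  rw [qbinom_vandermonde, sum_mul]
  refine sum_congr rfl fun p hp => ?_
  rw [mul_assoc, qbinom_mul_qbinom, mul_sum]
  refine sum_congr rfl fun q _ => ?_
  have hm : (m : ℤ) - p.1 = p.2 := by
    rw [← mem_antidiagonal.mp hp]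
    push_cast
    ring
  have hexp : v ^ (ρ * p.2 - α * p.1) * v ^ (l * (p.2 : ℤ) - α * q.1) =
      v ^ ((ρ + l) * (m - p.1)) * v ^ (-(α * (p.1 + q.1))) := by
    simp only [← zpow_add₀ v_ne_zero, hm]
    ring_nf
  linear_combination
    qbinom ρ p.1 * (qbinom l q.1 * qbinom (l + q.2) l) * qbinom α (l + q.2) * hexp

theorem sum_antidiagonal_assoc {A M : Type*} [AddCommMonoid A] [HasAntidiagonal A]
    [AddCommMonoid M] (n : A) (f : A → A → A → M) :
    ∑ p ∈ antidiagonal n, ∑ q ∈ antidiagonal p.2, f p.1 q.1 q.2 =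
      ∑ p ∈ antidiagonal n, ∑ q ∈ antidiagonal p.1, f q.1 q.2 p.2 := by
  simp only [sum_sigma']
  refine sum_nbij' (fun ⟨⟨i, _⟩, ⟨j, k⟩⟩ => ⟨(i + j, k), (i, j)⟩)
    (fun ⟨⟨_, k⟩, ⟨i, j⟩⟩ => ⟨(i, j + k), (j, k)⟩) ?_ ?_ ?_ ?_ ?_ <;>
  · rintro ⟨⟨a, b⟩, ⟨c, d⟩⟩
    simp only [mem_sigma, HasAntidiagonal.mem_antidiagonal]
    rintro ⟨rfl, rfl⟩
    simp [add_assoc]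

theorem qbinom_add_mul_qbinom (ρ α : ℤ) (l m : ℕ) :
    qbinom (ρ + α) m * qbinom α l =
      ∑ p ∈ antidiagonal m,
        (∑ q ∈ antidiagonal p.1, v ^ ((ρ + l) * (m - q.1)) * qbinom ρ q.1 *
          (qbinom l q.2 * qbinom (l + p.2) l)) *
        v ^ (-(α * p.1)) * qbinom α (l + p.2) := by
  rw [qbinom_add_mul_qbinom_eq_sum_sum, sum_antidiagonal_assoc m fun j k b : ℕ =>
    v ^ ((ρ + l) * (m - j)) * qbinom ρ j * (qbinom l k * qbinom (l + b) l) *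
      v ^ (-(α * (j + k))) * qbinom α (l + b)]
  refine sum_congr rfl fun p _ => ?_
  rw [sum_mul, sum_mul]
  refine sum_congr rfl fun q hq => ?_
  have hν : (p.1 : ℤ) = q.1 + q.2 := mod_cast (mem_antidiagonal.mp hq).symm
  rw [hν]

theorem qbinom_add_mul_qbinom_eq_sum_qtri (ρ α : ℤ) (l m : ℕ) :
    qbinom (ρ + α) m * qbinom α l =
      ∑ ν ∈ Iic m,
        (∑ j ∈ Iic ν with ν ≤ l + j, v ^ (ρ * (m - j) + l * (m - j)) * qbinom ρ j *
          qtri (ν - j) (l + j - ν) (m - ν)) *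
        v ^ (-(α * ν)) * qbinom α (l + m - ν) := by
  rw [qbinom_add_mul_qbinom, Nat.sum_antidiagonal_eq_sum_range_succ_mk, ← Nat.range_succ_eq_Iic]
  refine sum_congr rfl fun ν hν => ?_
  have hνm : ν ≤ m := mem_range_succ_iff.mp hν
  rw [Nat.add_sub_assoc hνm, Nat.sum_antidiagonal_eq_sum_range_succ_mk, Nat.range_succ_eq_Iic,
    ← sum_filter_of_ne (p := fun j => ν ≤ l + j)]
  · congr! 3 with j hj
    obtain ⟨hjν, hνl⟩ : j ≤ ν ∧ ν ≤ l + j := by simpa using hj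
    have hl : ν - j + (l + j - ν) = l := by lia
    simp only [add_mul, qtri_eq_qbinom_mul_qbinom, ← Nat.cast_add, hl]
  · intro j _
    contrapose!
    intro hlt
    rw [qbinom_eq_zero_of_lt (n := l) (by lia), zero_mul, mul_zero]

theorem lemma_4_1_vector_general (n : ℕ) (ρ : Fin n → ℤ) (lam μ : Fin n → ℕ) (α : Fin n → ℤ) :
    qbinomV (fun i => ρ i + α i) μ * qbinomV α lam =
      ∑ ν ∈ Iic μ,
        (∑ j ∈ Iic ν with ∀ i, ν i ≤ lam i + j i,
            v ^ (dotZ ρ (fun i => (μ i : ℤ) - (j i : ℤ)) +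
                  dotZ (fun i => (lam i : ℤ)) (fun i => (μ i : ℤ) - (j i : ℤ))) *
              qbinomV ρ j *
              ∏ i, qtri (ν i - j i) (lam i + j i - ν i) (μ i - ν i)) *
          v ^ (-dotZ α (fun i => (ν i : ℤ))) *
          qbinomV α (fun i => lam i + μ i - ν i) := by
  have hIic (ν : Fin n → ℕ) : Fintype.piFinset (fun i => Iic (ν i)) = Iic ν := rfl
  have hfilter (ν : Fin n → ℕ) :
      Fintype.piFinset (fun i => {j ∈ Iic (ν i) | ν i ≤ lam i + j}) =
        {j ∈ Iic ν | ∀ i, ν i ≤ lam i + j i} := by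
    ext j
    simp [Pi.le_def, forall_and]
  simp only [qbinomV, dotZ, ← prod_mul_distrib, qbinom_add_mul_qbinom_eq_sum_qtri, prod_univ_sum,
    hIic]
  refine sum_congr rfl fun ν _ => ?_
  simp only [← sum_add_distrib, ← sum_neg_distrib, zpow_sum_of_ne_zero v_ne_zero,
    prod_mul_distrib, prod_univ_sum, hfilter]

/-- The coefficient identity underlying Lemma 4.1 (vector form):
`[ρ+α ∣ μ]·[α ∣ λ] = ∑_{ν ≤ μ} b_ν v^{-α·ν} [α ∣ λ+μ-ν]`, where
`b_ν = ∑_{ν-λ ≤ j ≤ ν} v^{ρ·(μ-j)+λ·(μ-j)} [ρ ∣ j]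
   ∏ i, [λ_i+μ_i-ν_i ; ν_i-j_i, λ_i-ν_i+j_i, μ_i-ν_i]`. -/
theorem lemma_4_1_vector (n : ℕ) (hn : 1 ≤ n) (ρ lam μ : Fin n → ℕ) (α : Fin n → ℤ) :
    qbinomV (fun i => (ρ i : ℤ) + α i) μ * qbinomV α lam =
      ∑ ν ∈ Finset.Iic μ,
        (∑ j ∈ (Finset.Iic ν).filter (fun j => ∀ i, ν i ≤ lam i + j i),
            v ^ (dotZ (fun i => (ρ i : ℤ)) (fun i => (μ i : ℤ) - (j i : ℤ)) +
                  dotZ (fun i => (lam i : ℤ)) (fun i => (μ i : ℤ) - (j i : ℤ))) *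
              qbinomV (fun i => (ρ i : ℤ)) j *
              ∏ i, qtri (ν i - j i) (lam i + j i - ν i) (μ i - ν i)) *
          v ^ (-dotZ α (fun i => (ν i : ℤ))) *
          qbinomV α (fun i => lam i + μ i - ν i) :=
  lemma_4_1_vector_general n (fun i => ρ i) lam μ α
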